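/- Let 𝒜 = (A_1,…,A_m) be an m-tuple of n×n complex matrices such that Σ_{k=1}^m A_k A_kᴴ is positive definite, let f(X) := log det(Σ_{k=1}^m A_k X A_kᴴ) − log det X on positive definite Hermitian X, and for Hermitian H let f^∞(H) := lim_{t→∞} (f(e^{tH}) − f(I))/t. Then the infimum of f^∞(H) over all Hermitian n×n matrices H whose spectral norm (largest absolute value of an eigenvalue) is at most 1 equals 2 · min over all complex linear subspaces U ≤ ℂ^n of (dim 𝒜U − dim U). -/

import Mathlib

noncomputable section
open scoped Classical
open Matrix Filter
open scoped ComplexOrder Topology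

/-- The completely positive operator `T_𝒜(X) = ∑ k, A k * X * (A k)ᴴ`. -/
def Tcp {m n : ℕ} (A : Fin m → Matrix (Fin n) (Fin n) ℂ)
    (X : Matrix (Fin n) (Fin n) ℂ) : Matrix (Fin n) (Fin n) ℂ :=
  ∑ k, A k * X * (A k)ᴴ

/-- `f(X) = log det (∑ k, A_k X A_kᴴ) - log det X`. -/
def fdet {m n : ℕ} (A : Fin m → Matrix (Fin n) (Fin n) ℂ)
    (X : Matrix (Fin n) (Fin n) ℂ) : ℝ :=
  Real.log (Tcp A X).det.re - Real.log X.det.re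

/-- `𝒜U = ∑ k, A_k U`. -/
def ASpan {m : ℕ} {ι : Type*} [Fintype ι] [DecidableEq ι]
    (A : Fin m → Matrix ι ι ℂ) (U : Submodule ℂ (ι → ℂ)) : Submodule ℂ (ι → ℂ) :=
  ⨆ k, U.map (A k).mulVecLin

/-!
Let `U_a` be the span of the eigenvectors of `H` with eigenvalue at least `a`. The proof rests on
the formula `f^∞(H) = ∫_{-1}^{1} (dim 𝒜U_a - dim U_a) da`, valid when the spectrum of `H` lies in
`[-1, 1]`. By Cauchy–Binet, `det T_𝒜(e^{tH})` is a combination with nonnegative coefficients of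
exponentials `e^{tw}`, one for each `n`-tuple of vectors among the `A_k v_j`, where `v_j` are the
eigenvectors of `H` and `w` is the sum of the corresponding eigenvalues; the coefficient is nonzero
exactly when the tuple is a basis. As `t → ∞` the maximal weight of a basis survives. By the
exchange property, a basis of maximal weight contains a basis of `𝒜U_a` for every `a`, so its weight
is the integral of `dim 𝒜U_a` up to a constant. The constant cancels against `log det e^{tH}`, to
which the same computation applies.

The integrand is bounded below by the minimum of `dim 𝒜U - dim U`. Conversely, if `H` is the
reflection fixing `U` and negating its orthogonal complement, then `U_a = U` for `-1 < a < 1`.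
-/

section CauchyBinet

variable {R 𝕜 ι κ : Type*} [CommRing R] [RCLike 𝕜] [Fintype ι] [DecidableEq ι] [Fintype κ]

theorem det_mul_eq_sum_prod_mul_det_submatrix (M : Matrix ι κ R) (N : Matrix κ ι R) :
    (M * N).det = ∑ f : ι → κ, (∏ i, M i (f i)) * (N.submatrix f id).det := by
  have rows : M * N = fun i => ∑ p, M i p • N p := by
    ext i j
    simp only [mul_apply, Finset.sum_apply, Pi.smul_apply, smul_eq_mul]
  calc (M * N).det = detRowAlternating fun i => ∑ p, M i p • N p := congrArg det rows
    _ = ∑ f : ι → κ, detRowAlternating fun i => M i (f i) • N (f i) :=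
      detRowAlternating.toMultilinearMap.map_sum fun i p => M i p • N p
    _ = ∑ f : ι → κ, (∏ i, M i (f i)) * (N.submatrix f id).det :=
      Finset.sum_congr rfl fun f _ =>
        detRowAlternating.toMultilinearMap.map_smul_univ (fun i => M i (f i)) fun i => N (f i)

/-- Summing over all maps `ι → κ`, each maximal minor occurs `(card ι)!` times. This avoids
choosing enumerations of the `card ι`-element subsets of `κ`. -/
theorem factorial_card_mul_det_mul (M : Matrix ι κ R) (N : Matrix κ ι R) :
    ((Fintype.card ι).factorial : R) * (M * N).det =
      ∑ f : ι → κ, (M.submatrix id f).det * (N.submatrix f id).det := by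
  have reindexed (σ : Equiv.Perm ι) : (M * N).det =
      ∑ f : ι → κ, (Equiv.Perm.sign σ * ∏ i, M i (f (σ i))) * (N.submatrix f id).det := by
    rw [det_mul_eq_sum_prod_mul_det_submatrix,
      ← Equiv.sum_comp (Equiv.arrowCongr σ.symm (Equiv.refl κ))]
    refine Finset.sum_congr rfl fun f _ => ?_
    have permuted := det_permute σ (N.submatrix f id)
    rw [submatrix_submatrix] at permuted
    change (∏ i, M i (f (σ i))) * (N.submatrix (f ∘ σ) (id ∘ id)).det = _
    rw [permuted]
    ring
  calc ((Fintype.card ι).factorial : R) * (M * N).det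
      = ∑ _σ : Equiv.Perm ι, (M * N).det := by
        rw [Finset.sum_const, Finset.card_univ, Fintype.card_perm, nsmul_eq_mul]
    _ = ∑ f : ι → κ, (M.submatrix id f).det * (N.submatrix f id).det := by
        rw [Finset.sum_congr rfl fun σ _ => reindexed σ, Finset.sum_comm]
        refine Finset.sum_congr rfl fun f _ => ?_
        rw [← Finset.sum_mul, ← det_transpose (M.submatrix id f), det_apply' (M.submatrix id f)ᵀ]
        rfl

theorem factorial_card_mul_det_mul_diagonal_mul_conjTranspose [DecidableEq κ]
    (M : Matrix ι κ 𝕜) (d : κ → ℝ) :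
    ((Fintype.card ι).factorial : 𝕜) * (M * diagonal (fun p => (d p : 𝕜)) * Mᴴ).det =
      ((∑ f : ι → κ, ‖(M.submatrix id f).det‖ ^ 2 * ∏ i, d (f i) : ℝ) : 𝕜) := by
  rw [factorial_card_mul_det_mul, RCLike.ofReal_sum]
  refine Finset.sum_congr rfl fun f _ => ?_
  have columns : (M * diagonal fun p => (d p : 𝕜)).submatrix id f =
      M.submatrix id f * diagonal fun i => (d (f i) : 𝕜) := by
    ext i j
    simp only [submatrix_apply, mul_diagonal, id_eq]
  rw [columns, ← conjTranspose_submatrix, det_mul, det_diagonal, det_conjTranspose,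
    mul_right_comm, RCLike.star_def, RCLike.mul_conj]
  simp only [map_mul, map_pow, map_prod]

end CauchyBinet

section LogSumExp

/-- Tropicalization: as `t → ∞` only the largest exponent with a positive coefficient survives. -/
theorem tendsto_log_sum_mul_exp_div {ι : Type*} [Fintype ι] {c w : ι → ℝ} {j : ι}
    (hc : ∀ i, 0 ≤ c i) (hj : 0 < c j) (hmax : ∀ i, 0 < c i → w i ≤ w j) :
    Tendsto (fun t : ℝ => Real.log (∑ i, c i * Real.exp (t * w i)) / t) atTop (𝓝 (w j)) := by
  have total_pos : 0 < ∑ i, c i := Finset.sum_pos' (fun i _ => hc i) ⟨j, Finset.mem_univ j, hj⟩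
  have limit (b : ℝ) : Tendsto (fun t : ℝ => b / t + w j) atTop (𝓝 (w j)) := by
    simpa only [id_eq, zero_add] using (tendsto_const_nhds.div_atTop tendsto_id).add_const (w j)
  have log_mul_exp {b t : ℝ} (hb : 0 < b) (ht : 0 < t) :
      Real.log (b * Real.exp (t * w j)) / t = Real.log b / t + w j := by
    rw [Real.log_mul hb.ne' (Real.exp_ne_zero _), Real.log_exp, add_div,
      mul_div_cancel_left₀ _ ht.ne']
  have lower (t : ℝ) : c j * Real.exp (t * w j) ≤ ∑ i, c i * Real.exp (t * w i) :=
    Finset.single_le_sum (f := fun i => c i * Real.exp (t * w i))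
      (fun i _ => mul_nonneg (hc i) (Real.exp_pos _).le) (Finset.mem_univ j)
  have upper {t : ℝ} (ht : 0 < t) :
      ∑ i, c i * Real.exp (t * w i) ≤ (∑ i, c i) * Real.exp (t * w j) := by
    rw [Finset.sum_mul]
    refine Finset.sum_le_sum fun i _ => ?_
    rcases (hc i).eq_or_lt with hi | hi
    · simp only [← hi, zero_mul, le_refl]
    · gcongr
      exact hmax i hi
  refine tendsto_of_tendsto_of_tendsto_of_le_of_le' (limit (Real.log (c j)))
    (limit (Real.log (∑ i, c i))) ?_ ?_
  all_goals filter_upwards [eventually_gt_atTop 0] with t ht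
  · rw [← log_mul_exp hj ht]
    gcongr
    exact lower t
  · rw [← log_mul_exp total_pos ht]
    have sum_pos : 0 < ∑ i, c i * Real.exp (t * w i) :=
      (mul_pos hj (Real.exp_pos _)).trans_le (lower t)
    gcongr
    exact upper ht

end LogSumExp

section MaxWeightBasis

variable {K V Γ ι κ : Type*} [Field K] [AddCommGroup V] [Module K V]
  [AddCommMonoid Γ] [LinearOrder Γ] [IsOrderedCancelAddMonoid Γ] [Fintype ι]
  {v : κ → V} {f : ι → κ} {w : κ → Γ}

/-- Otherwise a basis vector of weight less than `a` could be exchanged for `v p`. -/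
theorem mem_span_image_of_maximal_weight (hf : LinearIndependent K (v ∘ f))
    (hspan : Submodule.span K (Set.range (v ∘ f)) = ⊤)
    (hmax : ∀ g : ι → κ, LinearIndependent K (v ∘ g) → ∑ i, w (g i) ≤ ∑ i, w (f i))
    {a : Γ} {p : κ} (hp : a ≤ w p) :
    v p ∈ Submodule.span K (v ∘ f '' {i | a ≤ w (f i)}) := by
  let b := Module.Basis.mk hf hspan.ge
  have hb : ⇑b = v ∘ f := Module.Basis.coe_mk hf hspan.ge
  rw [← hb, b.mem_span_image]
  intro i hi
  by_contra hi'
  have lighter : w (f i) < w p := (not_le.1 hi').trans_le hp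
  have exchanged : LinearIndependent K (v ∘ Function.update f i p) := by
    rw [Function.comp_update]
    refine hf.update i (v p) ⟨1, one_mem _, b.repr (v p),
      mem_nonZeroDivisors_of_ne_zero (Finsupp.mem_support_iff.1 hi), ?_⟩
    rw [one_smul, ← hb, b.linearCombination_repr]
  have heavier : ∑ k, w (f k) < ∑ k, w (Function.update f i p k) := by
    refine Finset.sum_lt_sum (fun k _ => ?_) ⟨i, Finset.mem_univ i, ?_⟩
    · rcases eq_or_ne k i with rfl | hk
      · rw [Function.update_self]
        exact lighter.le
      · rw [Function.update_of_ne hk]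
    · rwa [Function.update_self]
  exact heavier.not_ge (hmax _ exchanged)

theorem finrank_span_image_eq_card_of_maximal_weight (hf : LinearIndependent K (v ∘ f))
    (hspan : Submodule.span K (Set.range (v ∘ f)) = ⊤)
    (hmax : ∀ g : ι → κ, LinearIndependent K (v ∘ g) → ∑ i, w (g i) ≤ ∑ i, w (f i)) (a : Γ) :
    Module.finrank K (Submodule.span K (v '' {p | a ≤ w p})) =
      Fintype.card {i // a ≤ w (f i)} := by
  have span_eq : Submodule.span K (v '' {p | a ≤ w p}) =
      Submodule.span K (v ∘ f '' {i | a ≤ w (f i)}) := by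
    refine le_antisymm (Submodule.span_le.2 ?_) (Submodule.span_mono ?_)
    · rintro _ ⟨p, hp, rfl⟩
      exact mem_span_image_of_maximal_weight hf hspan hmax hp
    · rintro _ ⟨i, hi, rfl⟩
      exact ⟨f i, hi, rfl⟩
  rw [span_eq, Set.image_eq_range]
  exact finrank_span_eq_card (hf.comp _ Subtype.val_injective)

end MaxWeightBasis

section LayerCake

theorem integral_card_le_eq_sum_sub {ι : Type*} [Fintype ι] {x : ι → ℝ} {α β : ℝ}
    (hx : ∀ i, x i ∈ Set.Icc α β) :
    ∫ a in α..β, (Fintype.card {i // a ≤ x i} : ℝ) = ∑ i, (x i - α) := by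
  have card_eq (a : ℝ) : (Fintype.card {i // a ≤ x i} : ℝ) =
      ∑ i, Set.indicator {b | b ≤ x i} (fun _ => (1 : ℝ)) a := by
    simp only [Fintype.card_subtype, Set.indicator_apply, Set.mem_ofPred_eq, Finset.sum_boole]
  simp only [card_eq]
  rw [intervalIntegral.integral_finsetSum]
  · refine Finset.sum_congr rfl fun i _ => ?_
    rw [intervalIntegral.integral_indicator (hx i), intervalIntegral.integral_const, smul_eq_mul,
      mul_one]
  · intro i _
    have h : IntervalIntegrable (fun _ => (1 : ℝ)) MeasureTheory.volume α β :=
      intervalIntegrable_const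
    exact ⟨h.1.indicator measurableSet_Iic, h.2.indicator measurableSet_Iic⟩

end LayerCake

section GramDeterminant

theorem det_submatrix_ne_zero_iff_linearIndependent {K ι κ : Type*} [Field K] [Fintype ι]
    [DecidableEq ι] {M : Matrix ι κ K} {f : ι → κ} :
    (M.submatrix id f).det ≠ 0 ↔ LinearIndependent K (M.col ∘ f) := by
  rw [← isUnit_iff_ne_zero, ← isUnit_iff_isUnit_det, ← linearIndependent_cols_iff_isUnit]
  rfl

variable {𝕜 ι κ : Type*} [RCLike 𝕜] [Fintype ι] [DecidableEq ι] [Fintype κ]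

theorem re_det_mul_diagonal_exp_mul_conjTranspose [DecidableEq κ]
    (M : Matrix ι κ 𝕜) (w : κ → ℝ) (t : ℝ) :
    RCLike.re (M * diagonal (fun p => (Real.exp (t * w p) : 𝕜)) * Mᴴ).det =
      ∑ f : ι → κ, ‖(M.submatrix id f).det‖ ^ 2 / (Fintype.card ι).factorial *
        Real.exp (t * ∑ i, w (f i)) := by
  have minors := congrArg RCLike.re
    (factorial_card_mul_det_mul_diagonal_mul_conjTranspose M fun p => Real.exp (t * w p))
  rw [← RCLike.ofReal_natCast, RCLike.re_ofReal_mul, RCLike.ofReal_re] at minors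
  simp only [div_mul_eq_mul_div, Finset.mul_sum, Real.exp_sum, ← Finset.sum_div, ← minors]
  exact (mul_div_cancel_left₀ _ (Nat.cast_ne_zero.2 (Nat.factorial_ne_zero _))).symm

theorem exists_maximal_weight_columns {Γ : Type*} [AddCommMonoid Γ] [LinearOrder Γ]
    {M : Matrix ι κ 𝕜} (hM : (M * Mᴴ).det ≠ 0) (w : κ → Γ) :
    ∃ f : ι → κ, LinearIndependent 𝕜 (M.col ∘ f) ∧
      ∀ g : ι → κ, LinearIndependent 𝕜 (M.col ∘ g) → ∑ i, w (g i) ≤ ∑ i, w (f i) := by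
  have nonempty : {f : ι → κ | LinearIndependent 𝕜 (M.col ∘ f)}.Nonempty := by
    by_contra! h
    have vanishing (f : ι → κ) : (M.submatrix id f).det = 0 := by
      by_contra hf
      exact (Set.ext_iff.1 h f).1 (det_submatrix_ne_zero_iff_linearIndependent.1 hf)
    have cauchyBinet := factorial_card_mul_det_mul M Mᴴ
    simp only [vanishing, zero_mul, Finset.sum_const_zero] at cauchyBinet
    exact (mul_ne_zero (Nat.cast_ne_zero.2 (Nat.factorial_ne_zero _)) hM) cauchyBinet
  exact Set.exists_max_image _ (fun f => ∑ i, w (f i)) (Set.toFinite _) nonempty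

theorem tendsto_log_det_mul_diagonal_exp_mul_conjTranspose_div [DecidableEq κ]
    {M : Matrix ι κ 𝕜} (hM : (M * Mᴴ).det ≠ 0) {w : κ → ℝ} {α β : ℝ}
    (hw : ∀ p, w p ∈ Set.Icc α β) :
    Tendsto (fun t : ℝ => Real.log (RCLike.re
        (M * diagonal (fun p => (Real.exp (t * w p) : 𝕜)) * Mᴴ).det) / t) atTop
      (𝓝 ((∫ a in α..β, (Module.finrank 𝕜 (Submodule.span 𝕜 (M.col '' {p | a ≤ w p})) : ℝ)) +
        Fintype.card ι * α)) := by
  obtain ⟨f, hf, hmax⟩ := exists_maximal_weight_columns hM w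
  have coeff_pos {g : ι → κ} : 0 < ‖(M.submatrix id g).det‖ ^ 2 / (Fintype.card ι).factorial ↔
      LinearIndependent 𝕜 (M.col ∘ g) := by
    rw [← det_submatrix_ne_zero_iff_linearIndependent, div_pos_iff_of_pos_right (by positivity)]
    simp only [sq_pos_iff, ne_eq, norm_eq_zero]
  have span_eq_top : Submodule.span 𝕜 (Set.range (M.col ∘ f)) = ⊤ :=
    hf.span_eq_top_of_card_eq_finrank' (Module.finrank_fintype_fun_eq_card 𝕜).symm
  have max_weight : (∫ a in α..β,
      (Module.finrank 𝕜 (Submodule.span 𝕜 (M.col '' {p | a ≤ w p})) : ℝ)) +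
        Fintype.card ι * α = ∑ i, w (f i) := by
    simp only [finrank_span_image_eq_card_of_maximal_weight hf span_eq_top hmax]
    rw [integral_card_le_eq_sum_sub fun i => hw (f i), Finset.sum_sub_distrib, Finset.sum_const,
      Finset.card_univ, nsmul_eq_mul, sub_add_cancel]
  rw [max_weight]
  simp only [re_det_mul_diagonal_exp_mul_conjTranspose]
  exact tendsto_log_sum_mul_exp_div (w := fun g : ι → κ => ∑ i, w (g i))
    (fun g => by positivity) (coeff_pos.2 hf) fun g hg => hmax g (coeff_pos.1 hg)

end GramDeterminant

section Spectral

variable {𝕜 ι : Type*} [RCLike 𝕜] [Fintype ι] [DecidableEq ι] {H : Matrix ι ι 𝕜}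

theorem exists_isHermitian_involutive_fixing (U : Submodule 𝕜 (ι → 𝕜)) :
    ∃ H : Matrix ι ι 𝕜, H.IsHermitian ∧ H * H = 1 ∧ ∀ x, H *ᵥ x = x ↔ x ∈ U := by
  let K : Submodule 𝕜 (EuclideanSpace 𝕜 ι) := U.comap (WithLp.linearEquiv 2 𝕜 (ι → 𝕜)).toLinearMap
  let s : EuclideanSpace 𝕜 ι →L[𝕜] EuclideanSpace 𝕜 ι := K.reflection.toContinuousLinearEquiv
  let toCLM := toEuclideanCLM (n := ι) (𝕜 := 𝕜)
  have selfAdjoint : star s = s :=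
    K.reflection.adjoint_eq_symm.trans (by rw [K.reflection_symm])
  have involutive : s * s = 1 := ContinuousLinearMap.ext K.reflection_reflection
  obtain ⟨H, hH : toCLM H = s⟩ := EquivLike.surjective toCLM s
  refine ⟨H, EquivLike.injective toCLM ?_, EquivLike.injective toCLM ?_, fun x => ?_⟩
  · rw [← star_eq_conjTranspose, map_star, hH, selfAdjoint]
  · rw [map_mul, hH, involutive, map_one]
  · have apply_eq : H *ᵥ x = (K.reflection (WithLp.toLp 2 x)).ofLp :=
      (ofLp_toEuclideanCLM H (WithLp.toLp 2 x)).symm.trans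
        (congrArg WithLp.ofLp (DFunLike.congr_fun hH (WithLp.toLp 2 x)))
    rw [apply_eq, ← (WithLp.toLp_injective 2).eq_iff]
    exact K.reflection_eq_self_iff _

theorem abs_eigenvalues_of_mul_self_eq_one (hH : H.IsHermitian) (hHH : H * H = 1) (j : ι) :
    |hH.eigenvalues j| = 1 := by
  have : Nonempty ι := ⟨j⟩
  have mem := spectrum.pow_mem_pow (𝕜 := ℝ) H 2 (hH.eigenvalues_mem_spectrum_real j)
  rw [pow_two H, hHH, spectrum.one_eq, Set.mem_singleton_iff] at mem
  exact (abs_eq zero_le_one).2 (sq_eq_one_iff.1 mem)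

theorem eigenvectorUnitary_mul_conjTranspose (hH : H.IsHermitian) :
    (hH.eigenvectorUnitary : Matrix ι ι 𝕜) * (hH.eigenvectorUnitary : Matrix ι ι 𝕜)ᴴ = 1 :=
  Unitary.coe_mul_star_self hH.eigenvectorUnitary

theorem eq_eigenvectorUnitary_mul_diagonal_mul_conjTranspose (hH : H.IsHermitian) :
    H = (hH.eigenvectorUnitary : Matrix ι ι 𝕜) * diagonal (fun j => (hH.eigenvalues j : 𝕜)) *
      (hH.eigenvectorUnitary : Matrix ι ι 𝕜)ᴴ :=
  hH.spectral_theorem.trans (Unitary.conjStarAlgAut_apply _ _)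

theorem exp_smul_eq_mul_diagonal_mul_conjTranspose (hH : H.IsHermitian) (t : ℝ) :
    NormedSpace.exp (t • H) = (hH.eigenvectorUnitary : Matrix ι ι 𝕜) *
      diagonal (fun j => (Real.exp (t * hH.eigenvalues j) : 𝕜)) *
        (hH.eigenvectorUnitary : Matrix ι ι 𝕜)ᴴ := by
  have unitary := eigenvectorUnitary_mul_conjTranspose hH
  have decomposition := eq_eigenvectorUnitary_mul_diagonal_mul_conjTranspose hH
  generalize (hH.eigenvectorUnitary : Matrix ι ι 𝕜) = V at unitary decomposition ⊢
  have smul_diagonal : t • diagonal (fun j => (hH.eigenvalues j : 𝕜)) =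
      diagonal fun j => ((t * hH.eigenvalues j : ℝ) : 𝕜) := by
    rw [← diagonal_smul]
    congr 1
    ext j
    rw [Pi.smul_apply, RCLike.real_smul_eq_coe_mul, RCLike.ofReal_mul]
  conv_lhs => rw [decomposition]
  rw [← smul_mul_assoc, ← mul_smul_comm, smul_diagonal, ← inv_eq_right_inv unitary,
    exp_conj _ _ (IsUnit.of_mul_eq_one _ unitary), exp_diagonal]
  congr 3
  ext j
  rw [Pi.coe_exp, Real.exp_eq_exp_ℝ]
  exact (NormedSpace.algebraMap_exp_comm (𝔸 := 𝕜) (t * hH.eigenvalues j)).symm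

/-- The span of the eigenvectors of `H` with eigenvalue at least `a`. -/
def upperSpectralSubspace (hH : H.IsHermitian) (a : ℝ) : Submodule 𝕜 (ι → 𝕜) :=
  Submodule.span 𝕜 ((hH.eigenvectorUnitary : Matrix ι ι 𝕜).col '' {j | a ≤ hH.eigenvalues j})

theorem upperSpectralSubspace_antitone (hH : H.IsHermitian) :
    Antitone (upperSpectralSubspace hH) := fun _ _ hab =>
  Submodule.span_mono (Set.image_mono fun _ hb => hab.trans hb)

theorem mem_upperSpectralSubspace_of_mulVec_eq_smul (hH : H.IsHermitian) {x : ι → 𝕜} {a b : ℝ}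
    (hx : H *ᵥ x = (b : 𝕜) • x) (hab : a ≤ b) : x ∈ upperSpectralSubspace hH a := by
  have unitary := eigenvectorUnitary_mul_conjTranspose hH
  have decomposition := eq_eigenvectorUnitary_mul_diagonal_mul_conjTranspose hH
  set V := (hH.eigenvectorUnitary : Matrix ι ι 𝕜)
  have coordinates (j : ι) :
      (hH.eigenvalues j : 𝕜) * (Vᴴ *ᵥ x) j = (b : 𝕜) * (Vᴴ *ᵥ x) j := by
    have eigen : Vᴴ *ᵥ (H *ᵥ x) = diagonal (fun j => (hH.eigenvalues j : 𝕜)) *ᵥ (Vᴴ *ᵥ x) := by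
      conv_lhs => rw [decomposition]
      simp only [mulVec_mulVec, ← mul_assoc, mul_eq_one_comm.1 unitary, one_mul]
    rw [hx, mulVec_smul] at eigen
    simpa only [mulVec_diagonal, Pi.smul_apply, smul_eq_mul] using (congrFun eigen j).symm
  have expansion : x = ∑ j, (Vᴴ *ᵥ x) j • V.col j := by
    have column_combination := mulVec_eq_sum (Vᴴ *ᵥ x) V
    rw [mulVec_mulVec, unitary, one_mulVec] at column_combination
    simp only [op_smul_eq_smul] at column_combination
    exact column_combination
  rw [expansion]
  refine Submodule.sum_mem _ fun j _ => ?_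
  by_cases hj : (Vᴴ *ᵥ x) j = 0
  · rw [hj, zero_smul]
    exact zero_mem _
  · have eigenvalue_eq : hH.eigenvalues j = b :=
      RCLike.ofReal_injective (mul_right_cancel₀ hj (coordinates j))
    exact Submodule.smul_mem _ _ (Submodule.subset_span ⟨j, hab.trans eigenvalue_eq.ge, rfl⟩)

theorem upperSpectralSubspace_eq_of_involutive_fixing (hH : H.IsHermitian) (hHH : H * H = 1)
    {U : Submodule 𝕜 (ι → 𝕜)} (hU : ∀ x, H *ᵥ x = x ↔ x ∈ U) {a : ℝ}
    (ha : a ∈ Set.Ioo (-1) 1) : upperSpectralSubspace hH a = U := by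
  refine le_antisymm (Submodule.span_le.2 ?_) fun x hx => ?_
  · rintro _ ⟨j, hj, rfl⟩
    have eigenvalue_eq_one : hH.eigenvalues j = 1 :=
      ((abs_eq zero_le_one).1 (abs_eigenvalues_of_mul_self_eq_one hH hHH j)).resolve_right
        (ha.1.trans_le hj).ne'
    refine (hU _).1 ?_
    rw [hH.eigenvectorUnitary_col_eq, hH.mulVec_eigenvectorBasis, eigenvalue_eq_one, one_smul]
  · refine mem_upperSpectralSubspace_of_mulVec_eq_smul hH (b := 1) ?_ ha.2.le
    rw [(hU x).2 hx, RCLike.ofReal_one, one_smul]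

end Spectral

section Recession

variable {m n : ℕ} (A : Fin m → Matrix (Fin n) (Fin n) ℂ) {H V : Matrix (Fin n) (Fin n) ℂ}
  {α β r : ℝ}

/-- The matrix whose columns are the vectors `A_k v`, `v` running over the columns of `V`. It turns
`T_𝒜` of a matrix diagonalized by `V` into a Gram matrix. -/
def imageFrame (V : Matrix (Fin n) (Fin n) ℂ) : Matrix (Fin n) (Fin m × Fin n) ℂ :=
  of fun i p => (A p.1 * V) i p.2

theorem Tcp_mul_diagonal_mul_conjTranspose (V : Matrix (Fin n) (Fin n) ℂ) (d : Fin n → ℂ) :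
    Tcp A (V * diagonal d * Vᴴ) =
      imageFrame A V * diagonal (fun p : Fin m × Fin n => d p.2) * (imageFrame A V)ᴴ := by
  have conjugated (k : Fin m) :
      A k * (V * diagonal d * Vᴴ) * (A k)ᴴ = A k * V * diagonal d * (A k * V)ᴴ := by
    simp only [conjTranspose_mul, Matrix.mul_assoc]
  ext i j
  simp only [Tcp, conjugated, Matrix.sum_apply, mul_apply (M := _ * diagonal _), mul_diagonal,
    Fintype.sum_prod_type, imageFrame, of_apply, conjTranspose_apply]

theorem imageFrame_mul_conjTranspose (hV : V * Vᴴ = 1) :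
    imageFrame A V * (imageFrame A V)ᴴ = ∑ k, A k * (A k)ᴴ := by
  have identity := Tcp_mul_diagonal_mul_conjTranspose A V 1
  rw [Pi.one_def, diagonal_one, diagonal_one, Matrix.mul_one, Matrix.mul_one, hV] at identity
  simpa only [Tcp, Matrix.mul_one] using identity.symm

theorem ASpan_span_col_image (V : Matrix (Fin n) (Fin n) ℂ) (s : Set (Fin n)) :
    ASpan A (Submodule.span ℂ (V.col '' s)) =
      Submodule.span ℂ ((imageFrame A V).col '' {p | p.2 ∈ s}) := by
  have columns : (imageFrame A V).col '' {p | p.2 ∈ s} =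
      ⋃ k, (A k).mulVecLin '' (V.col '' s) := by
    ext x
    simp only [Set.mem_iUnion, Set.mem_image, Prod.exists, exists_exists_and_eq_and]
    rfl
  simp only [ASpan, Submodule.map_span, columns, Submodule.span_iUnion]

/-- `dim 𝒜U - dim U`, as a real number. -/
def dimExpansion (U : Submodule ℂ (Fin n → ℂ)) : ℝ :=
  (Module.finrank ℂ (ASpan A U) : ℝ) - (Module.finrank ℂ U : ℝ)

theorem ASpan_mono : Monotone (ASpan A) := fun _ _ hUW =>
  iSup_mono fun _ => Submodule.map_mono hUW

theorem bddBelow_range_dimExpansion : BddBelow (Set.range (dimExpansion A)) := by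
  refine ⟨-n, ?_⟩
  rintro _ ⟨U, rfl⟩
  have finrank_le : (Module.finrank ℂ U : ℝ) ≤ n := by
    exact_mod_cast U.finrank_le.trans_eq (Module.finrank_fin_fun ℂ)
  have : (0 : ℝ) ≤ Module.finrank ℂ (ASpan A U) := Nat.cast_nonneg _
  rw [dimExpansion]
  linarith

theorem intervalIntegrable_finrank_upperSpectralSubspace (hH : H.IsHermitian) :
    IntervalIntegrable (fun a => (Module.finrank ℂ (upperSpectralSubspace hH a) : ℝ))
      MeasureTheory.volume α β :=
  Antitone.intervalIntegrable fun _ _ hab =>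
    Nat.cast_le.2 (Submodule.finrank_mono (upperSpectralSubspace_antitone hH hab))

theorem intervalIntegrable_finrank_ASpan_upperSpectralSubspace (hH : H.IsHermitian) :
    IntervalIntegrable (fun a => (Module.finrank ℂ (ASpan A (upperSpectralSubspace hH a)) : ℝ))
      MeasureTheory.volume α β :=
  Antitone.intervalIntegrable fun _ _ hab =>
    Nat.cast_le.2 (Submodule.finrank_mono (ASpan_mono A (upperSpectralSubspace_antitone hH hab)))

theorem tendsto_log_det_exp_div (hH : H.IsHermitian) (hαβ : ∀ j, hH.eigenvalues j ∈ Set.Icc α β) :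
    Tendsto (fun t : ℝ => Real.log (NormedSpace.exp (t • H)).det.re / t) atTop
      (𝓝 ((∫ a in α..β, (Module.finrank ℂ (upperSpectralSubspace hH a) : ℝ)) + n * α)) := by
  have unitary := eigenvectorUnitary_mul_conjTranspose hH
  have limit := tendsto_log_det_mul_diagonal_exp_mul_conjTranspose_div
    (by rw [unitary, det_one]; exact one_ne_zero) hαβ
  rw [Fintype.card_fin] at limit
  simp only [exp_smul_eq_mul_diagonal_mul_conjTranspose hH]
  exact limit

variable {A}

theorem tendsto_log_det_Tcp_exp_div (hA : (∑ k, A k * (A k)ᴴ).det ≠ 0) (hH : H.IsHermitian)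
    (hαβ : ∀ j, hH.eigenvalues j ∈ Set.Icc α β) :
    Tendsto (fun t : ℝ => Real.log (Tcp A (NormedSpace.exp (t • H))).det.re / t) atTop
      (𝓝 ((∫ a in α..β, (Module.finrank ℂ (ASpan A (upperSpectralSubspace hH a)) : ℝ)) +
        n * α)) := by
  have unitary := eigenvectorUnitary_mul_conjTranspose hH
  have limit := tendsto_log_det_mul_diagonal_exp_mul_conjTranspose_div
    (by rwa [imageFrame_mul_conjTranspose A unitary]) fun p : Fin m × Fin n => hαβ p.2
  have finrank_eq (a : ℝ) : Module.finrank ℂ (ASpan A (upperSpectralSubspace hH a)) =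
      Module.finrank ℂ (Submodule.span ℂ
        ((imageFrame A hH.eigenvectorUnitary).col '' {p | a ≤ hH.eigenvalues p.2})) :=
    congrArg (fun W : Submodule ℂ (Fin n → ℂ) => Module.finrank ℂ W) (ASpan_span_col_image A _ _)
  rw [Fintype.card_fin] at limit
  simp only [exp_smul_eq_mul_diagonal_mul_conjTranspose hH, Tcp_mul_diagonal_mul_conjTranspose,
    finrank_eq]
  exact limit

theorem tendsto_fdet_exp_div (hA : (∑ k, A k * (A k)ᴴ).det ≠ 0) (hH : H.IsHermitian)
    (hαβ : ∀ j, hH.eigenvalues j ∈ Set.Icc α β) :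
    Tendsto (fun t : ℝ => (fdet A (NormedSpace.exp (t • H)) - fdet A 1) / t) atTop
      (𝓝 (∫ a in α..β, dimExpansion A (upperSpectralSubspace hH a))) := by
  have constant : Tendsto (fun t : ℝ => fdet A 1 / t) atTop (𝓝 0) :=
    tendsto_const_nhds.div_atTop tendsto_id
  have limit := ((tendsto_log_det_Tcp_exp_div hA hH hαβ).sub
    (tendsto_log_det_exp_div hH hαβ)).sub constant
  rw [add_sub_add_right_eq_sub, sub_zero, ← intervalIntegral.integral_sub
    (intervalIntegrable_finrank_ASpan_upperSpectralSubspace A hH)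
    (intervalIntegrable_finrank_upperSpectralSubspace hH)] at limit
  simpa only [← sub_div, fdet, dimExpansion] using limit

theorem two_mul_iInf_dimExpansion_le_of_tendsto (hA : (∑ k, A k * (A k)ᴴ).det ≠ 0)
    (hH : H.IsHermitian) (hl : ∀ j, |hH.eigenvalues j| ≤ 1)
    (hr : Tendsto (fun t : ℝ => (fdet A (NormedSpace.exp (t • H)) - fdet A 1) / t) atTop (𝓝 r)) :
    2 * ⨅ U, dimExpansion A U ≤ r := by
  rw [tendsto_nhds_unique hr (tendsto_fdet_exp_div hA hH fun j => abs_le.1 (hl j))]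
  calc 2 * ⨅ U, dimExpansion A U = ∫ _ in (-1 : ℝ)..1, ⨅ U, dimExpansion A U := by
        rw [intervalIntegral.integral_const, smul_eq_mul]
        norm_num
    _ ≤ ∫ a in (-1 : ℝ)..1, dimExpansion A (upperSpectralSubspace hH a) :=
      intervalIntegral.integral_mono (by norm_num) intervalIntegrable_const
        ((intervalIntegrable_finrank_ASpan_upperSpectralSubspace A hH).sub
          (intervalIntegrable_finrank_upperSpectralSubspace hH))
        fun a => ciInf_le (bddBelow_range_dimExpansion A) _

theorem exists_tendsto_fdet_exp_div_two_mul_dimExpansion (hA : (∑ k, A k * (A k)ᴴ).det ≠ 0)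
    (U : Submodule ℂ (Fin n → ℂ)) :
    ∃ (H : Matrix (Fin n) (Fin n) ℂ) (hH : H.IsHermitian), (∀ j, |hH.eigenvalues j| ≤ 1) ∧
      Tendsto (fun t : ℝ => (fdet A (NormedSpace.exp (t • H)) - fdet A 1) / t) atTop
        (𝓝 (2 * dimExpansion A U)) := by
  obtain ⟨H, hH, involutive, fixing⟩ := exists_isHermitian_involutive_fixing U
  have hl (j : Fin n) : |hH.eigenvalues j| ≤ 1 :=
    (abs_eigenvalues_of_mul_self_eq_one hH involutive j).le
  refine ⟨H, hH, hl, ?_⟩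
  have integral_eq : ∫ a in (-1 : ℝ)..1, dimExpansion A (upperSpectralSubspace hH a) =
      2 * dimExpansion A U := by
    rw [intervalIntegral.integral_congr_Ioo_of_le (by norm_num) fun a ha => congrArg
      (dimExpansion A) (upperSpectralSubspace_eq_of_involutive_fixing hH involutive fixing ha),
      intervalIntegral.integral_const, smul_eq_mul]
    norm_num
  rw [← integral_eq]
  exact tendsto_fdet_exp_div hA hH fun j => abs_le.1 (hl j)

end Recession

/-- The infimum of the recession function `f^∞(H)` over Hermitian `H` of spectral norm at
most `1` equals `2 · min_U (dim 𝒜U - dim U)`. -/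
theorem inf_recession_eq_two_min {m n : ℕ} (A : Fin m → Matrix (Fin n) (Fin n) ℂ)
    (hA : (∑ k, A k * (A k)ᴴ).PosDef) :
    sInf {r : ℝ | ∃ (H : Matrix (Fin n) (Fin n) ℂ) (hH : H.IsHermitian),
        (∀ i, |hH.eigenvalues i| ≤ 1) ∧
          Tendsto (fun t : ℝ => (fdet A (NormedSpace.exp (t • H)) - fdet A 1) / t)
            atTop (𝓝 r)}
      = 2 * sInf {d : ℝ | ∃ U : Submodule ℂ (Fin n → ℂ),
          d = (Module.finrank ℂ (ASpan A U) : ℝ) - (Module.finrank ℂ U : ℝ)} := by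
  have hdet := hA.det_pos.ne'
  have expansions : {d : ℝ | ∃ U : Submodule ℂ (Fin n → ℂ),
      d = (Module.finrank ℂ (ASpan A U) : ℝ) - (Module.finrank ℂ U : ℝ)} =
      Set.range (dimExpansion A) := Set.ext fun d => exists_congr fun U => eq_comm
  rw [expansions, sInf_range]
  refine IsGLB.csInf_eq ⟨?_, fun b hb => ?_⟩
    ⟨_, exists_tendsto_fdet_exp_div_two_mul_dimExpansion hdet ⊥⟩
  · rintro r ⟨H, hH, hl, hr⟩
    exact two_mul_iInf_dimExpansion_le_of_tendsto hdet hH hl hr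
  · rw [Real.mul_iInf_of_nonneg zero_le_two]
    exact le_ciInf fun U => hb (exists_tendsto_fdet_exp_div_two_mul_dimExpansion hdet U)
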